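/- arXiv:1601.06351 — 4 statements merged into one kernel-verified Lean document; each statement's English description precedes it below -/
import Mathlib

section
/- Let β ∈ ℝ, let a < b be real numbers, and let u : ℝ → ℝ be differentiable on [a, b]. Suppose there is a constant J ∈ ℝ such that u′(t) − β u(t) = J for all t ∈ [a, b]. Then (b − a) J = B(β(b − a)) u(b) − B(−β(b − a)) u(a). -/
/-- The Bernoulli function `B(s) = s / (e^s - 1)` for `s ≠ 0`, with `B(0) = 1`. -/
noncomputable def bernoulliFn (s : ℝ) : ℝ :=
  if s = 0 then 1 else s / (Real.exp s - 1)

/-! By variation of constants, a solution of `u' = β u + J` satisfies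
`u(b) = e^(β(b-a)) u(a) + Φ(b-a) J` with `Φ(x) = ∫₀ˣ e^(βr) dr`. Since `B(βx) Φ(x) = x`, for `β = 0`
as well, multiplying by `B(β(b-a))` turns the coefficient of `J` into `b - a`, and the coefficient
`e^(β(b-a)) B(β(b-a))` of `u(a)` is `B(-β(b-a))` by the reflection formula. -/

theorem bernoulliFn_zero : bernoulliFn 0 = 1 :=
  if_pos rfl

theorem bernoulliFn_mul_exp_sub_one (s : ℝ) : bernoulliFn s * (Real.exp s - 1) = s := by
  rcases eq_or_ne s 0 with rfl | hs
  · rw [Real.exp_zero, sub_self, mul_zero]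
  · rw [bernoulliFn, if_neg hs, div_mul_cancel₀ s (sub_ne_zero.2 (mt (Real.exp_eq_one_iff s).1 hs))]

theorem bernoulliFn_neg (s : ℝ) : bernoulliFn (-s) = Real.exp s * bernoulliFn s := by
  rcases eq_or_ne s 0 with rfl | hs
  · rw [neg_zero, Real.exp_zero, one_mul]
  · have hexp : Real.exp (-s) - 1 ≠ 0 :=
      sub_ne_zero.2 (mt (Real.exp_eq_one_iff (-s)).1 (neg_ne_zero.2 hs))
    have hinv : Real.exp s * Real.exp (-s) = 1 := by
      rw [← Real.exp_add, add_neg_cancel, Real.exp_zero]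
    refine mul_right_cancel₀ hexp ?_
    calc
      bernoulliFn (-s) * (Real.exp (-s) - 1) = -s := bernoulliFn_mul_exp_sub_one (-s)
      _ = -(bernoulliFn s * (Real.exp s - 1)) := by rw [bernoulliFn_mul_exp_sub_one]
      _ = Real.exp s * bernoulliFn s * (Real.exp (-s) - 1) := by
        linear_combination -bernoulliFn s * hinv

theorem mul_integral_exp_mul (β x : ℝ) :
    β * ∫ r in 0..x, Real.exp (β * r) = Real.exp (β * x) - 1 := by
  rw [intervalIntegral.mul_integral_comp_mul_left, integral_exp, mul_zero, Real.exp_zero]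

theorem bernoulliFn_mul_integral_exp_mul (β x : ℝ) :
    bernoulliFn (β * x) * ∫ r in 0..x, Real.exp (β * r) = x := by
  rcases eq_or_ne β 0 with rfl | hβ
  · simp only [zero_mul, bernoulliFn_zero, Real.exp_zero, integral_one, sub_zero, one_mul]
  · refine mul_left_cancel₀ hβ ?_
    rw [mul_left_comm, mul_integral_exp_mul, bernoulliFn_mul_exp_sub_one]

section

variable {E : Type*} [NormedAddCommGroup E] [NormedSpace ℝ E] {β a b : ℝ} {J : E} {u : ℝ → E}

theorem eq_exp_smul_add_integral_exp_smul_of_hasDerivWithinAt (hab : a ≤ b)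
    (hcont : ContinuousOn u (Set.Icc a b))
    (hderiv : ∀ t ∈ Set.Ico a b, HasDerivWithinAt u (β • u t + J) (Set.Ici t) t) :
    u b = Real.exp (β * (b - a)) • u a + (∫ r in 0..(b - a), Real.exp (β * r)) • J := by
  -- `v t` is the value at `b` of the solution that passes through `u t` at time `t`.
  let v : ℝ → E := fun t =>
    Real.exp (β * (b - t)) • u t + (∫ r in 0..(b - t), Real.exp (β * r)) • J
  have hsub (t : ℝ) : HasDerivAt (fun t => b - t) (-1) t := (hasDerivAt_id t).const_sub b
  have hexp (t : ℝ) : HasDerivAt (fun t => Real.exp (β * (b - t)))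
      (Real.exp (β * (b - t)) * (β * -1)) t := ((hsub t).const_mul β).exp
  have hint (t : ℝ) : HasDerivAt (fun t => ∫ r in 0..(b - t), Real.exp (β * r))
      (Real.exp (β * (b - t)) * -1) t :=
    ((by fun_prop : Continuous fun r => Real.exp (β * r)).integral_hasStrictDerivAt
      0 (b - t)).hasDerivAt.comp t (hsub t)
  have hv_cont : ContinuousOn v (Set.Icc a b) := fun t ht =>
    ((hexp t).continuousAt.continuousWithinAt.smul (hcont t ht)).add
      ((hint t).continuousAt.continuousWithinAt.smul continuousWithinAt_const)
  have hv_deriv (t : ℝ) (ht : t ∈ Set.Ico a b) : HasDerivWithinAt v 0 (Set.Ici t) t := by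
    refine (((hexp t).hasDerivWithinAt.smul (hderiv t ht)).add
      ((hint t).hasDerivWithinAt.smul_const J)).congr_deriv ?_
    module
  have hv : v b = v a :=
    constant_of_has_deriv_right_zero hv_cont hv_deriv b (Set.right_mem_Icc.2 hab)
  simpa only [v, sub_self, mul_zero, Real.exp_zero, one_smul, intervalIntegral.integral_same,
    zero_smul, add_zero] using hv

theorem scharfetter_gummel_1d_general {u' : ℝ → E} (hab : a ≤ b)
    (hcont : ContinuousOn u (Set.Icc a b))
    (hderiv : ∀ t ∈ Set.Ico a b, HasDerivWithinAt u (u' t) (Set.Ici t) t)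
    (hflux : ∀ t ∈ Set.Ico a b, u' t - β • u t = J) :
    (b - a) • J
      = bernoulliFn (β * (b - a)) • u b - bernoulliFn (-(β * (b - a))) • u a := by
  have hub := eq_exp_smul_add_integral_exp_smul_of_hasDerivWithinAt hab hcont fun t ht =>
    (hderiv t ht).congr_deriv (sub_eq_iff_eq_add'.1 (hflux t ht))
  rw [hub, bernoulliFn_neg, smul_add, smul_smul, smul_smul, bernoulliFn_mul_integral_exp_mul,
    mul_comm (bernoulliFn _), add_sub_cancel_left]

end

/-- The one-dimensional Scharfetter--Gummel two-point flux formula: if the flux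
`J = u' - β u` is constant on `[a, b]`, then
`(b - a) J = B(β (b - a)) u(b) - B(-β (b - a)) u(a)`. -/
theorem scharfetter_gummel_1d (β a b J : ℝ) (hab : a < b) (u u' : ℝ → ℝ)
    (hderiv : ∀ t ∈ Set.Icc a b, HasDerivAt u (u' t) t)
    (hflux : ∀ t ∈ Set.Icc a b, u' t - β * u t = J) :
    (b - a) * J
      = bernoulliFn (β * (b - a)) * u b - bernoulliFn (-(β * (b - a))) * u a :=
  scharfetter_gummel_1d_general hab.le (HasDerivAt.continuousOn hderiv)
    (fun t ht => (hderiv t (Set.Ico_subset_Icc_self ht)).hasDerivWithinAt)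
    fun t ht => hflux t (Set.Ico_subset_Icc_self ht)
end

section
/- Let d ≥ 1, let x₀, x₁, …, x_d be affinely independent points in ℝ^d, and let q ∈ ℝ^d. Let p ∈ ℝ^d be a constant vector such that for every pair of indices i ≠ j with 0 ≤ i, j ≤ d, ∫₀¹ e^{−q·(x_i + s(x_j − x_i))} (p · (x_j − x_i)) ds = 0. Then p = 0. -/
open RealInnerProductSpace

/-!
On an edge the integrand is the weight times the constant `φ (x j - x i)`, where `φ = ⟪p, ·⟫`, and
the weight has positive integral. Vanishing moments therefore make `φ` vanish on the edges at a
single vertex, and these already span the space.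
-/

theorem eq_zero_of_intervalIntegral_smul_const_eq_zero {E : Type*} [NormedAddCommGroup E]
    [NormedSpace ℝ E] [CompleteSpace E] {a b : ℝ} (hab : a < b) {w : ℝ → ℝ}
    (hw : IntervalIntegrable w MeasureTheory.volume a b) (hpos : ∀ s ∈ Set.Ioo a b, 0 < w s)
    {c : E} (h : ∫ s in a..b, w s • c = 0) : c = 0 := by
  have integral_pos : 0 < ∫ s in a..b, w s :=
    intervalIntegral.intervalIntegral_pos_of_pos_on hw hpos hab
  rw [intervalIntegral.integral_smul_const] at h
  exact (smul_eq_zero.mp h).resolve_left integral_pos.ne'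

theorem linearMap_eq_zero_of_map_vsub_eq_zero {k V W P ι : Type*} [Ring k] [AddCommGroup V]
    [Module k V] [AddCommGroup W] [Module k W] [AddTorsor V P] {x : ι → P}
    (hx : affineSpan k (Set.range x) = ⊤) (i : ι) {f : V →ₗ[k] W}
    (h : ∀ j, f (x j -ᵥ x i) = 0) : f = 0 := by
  have span_edges : Submodule.span k (Set.range fun j => x j -ᵥ x i) = ⊤ := by
    rw [← vectorSpan_range_eq_span_range_vsub_right, ← direction_affineSpan, hx,
      AffineSubspace.direction_top]
  exact LinearMap.ext_on_range span_edges h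

theorem eafe_lowest_order_unisolvence_general {V E ι : Type*} [AddCommGroup V] [Module ℝ V]
    [TopologicalSpace V] [ContinuousAdd V] [ContinuousSMul ℝ V] [NormedAddCommGroup E]
    [NormedSpace ℝ E] [CompleteSpace E] {x : ι → V} (hx : affineSpan ℝ (Set.range x) = ⊤)
    {ρ : V → ℝ} (hρ : ContinuousOn ρ (convexHull ℝ (Set.range x)))
    (hpos : ∀ y ∈ convexHull ℝ (Set.range x), 0 < ρ y) (i : ι) {φ : V →ₗ[ℝ] E}
    (h : ∀ j, j ≠ i → ∫ s in (0 : ℝ)..1, ρ (x i + s • (x j - x i)) • φ (x j - x i) = 0) :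
    φ = 0 := by
  refine linearMap_eq_zero_of_map_vsub_eq_zero hx i fun j => ?_
  rcases eq_or_ne j i with rfl | hji
  · simp
  have edge_mem : ∀ s ∈ Set.Icc (0 : ℝ) 1,
      x i + s • (x j - x i) ∈ convexHull ℝ (Set.range x) := fun s hs =>
    (convex_convexHull ℝ _).add_smul_sub_mem (subset_convexHull ℝ _ (Set.mem_range_self i))
      (subset_convexHull ℝ _ (Set.mem_range_self j)) hs
  have weight_continuousOn : ContinuousOn (fun s : ℝ => ρ (x i + s • (x j - x i)))
      (Set.Icc 0 1) :=
    hρ.comp (by fun_prop) edge_mem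
  exact eq_zero_of_intervalIntegral_smul_const_eq_zero one_pos
    (weight_continuousOn.intervalIntegrable_of_Icc zero_le_one)
    (fun s hs => hpos _ (edge_mem s (Set.Ioo_subset_Icc_self hs))) (h j hji)

/-- Unisolvence of the lowest-order exponentially weighted edge degrees of freedom:
if all exponentially weighted tangential edge moments of the constant field `p`
over the edges of a nondegenerate `d`-simplex vanish, then `p = 0`. -/
theorem eafe_lowest_order_unisolvence (d : ℕ) (hd : 1 ≤ d)
    (x : Fin (d + 1) → EuclideanSpace ℝ (Fin d)) (hx : AffineIndependent ℝ x)
    (q p : EuclideanSpace ℝ (Fin d))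
    (h : ∀ i j : Fin (d + 1), i ≠ j →
      (∫ s in (0:ℝ)..1, Real.exp (-⟪q, x i + s • (x j - x i)⟫) * ⟪p, x j - x i⟫) = 0) :
    p = 0 := by
  have hspan := hx.affineSpan_eq_top_iff_card_eq_finrank_add_one.mpr (by simp)
  have inner_eq_zero : innerₛₗ ℝ p = 0 :=
    eafe_lowest_order_unisolvence_general hspan (ρ := fun y => Real.exp (-⟪q, y⟫))
      (by fun_prop) (fun _ _ => Real.exp_pos _) 0 fun j hj => h 0 j hj.symm
  exact inner_self_eq_zero.mp (LinearMap.congr_fun inner_eq_zero p)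
end

section
/- Let n ≥ 1, r ≥ n, q ∈ ℝ^n, and let v₀, v₁, …, v_n be affinely independent points in ℝ^n with barycentric coordinates λ₀, …, λ_n; denote by ∇λ_j the (constant) gradient of λ_j. Let p₁, …, p_n be polynomial functions on ℝ^n of degree at most r − 1 and define the vector field u(x) = e^{−q·x} Σ_{j=1}^{n} p_j(x) ∇λ_j. Suppose that for each i ∈ {1,…,n} and every x in the affine span of {v_k : 0 ≤ k ≤ n, k ≠ i} (the face F_i = {λ_i = 0} of the simplex), the orthogonal projection of u(x) onto the direction space of that affine span is zero. Then for each j ∈ {1,…,n} there exists a polynomial function q_j of degree at most r − n such that p_j(x) = (∏_{k ∈ {1,…,n}, k ≠ j} λ_k(x)) q_j(x) for all x ∈ ℝ^n. -/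
open RealInnerProductSpace

/-!
An affine form `L` with nonzero linear part admits a projection of the space onto its zero
hyperplane that changes each coordinate by a multiple of `L`; hence a polynomial is congruent
modulo `L` to its composition with this projection, and one that vanishes on the hyperplane is
divisible by `L`.

On the face `F_k` the edge `v_j - v₀`, for `j ≠ k`, is tangential and pairs to `δ_{lj}` with
`∇λ_l`, so the vanishing trace forces `p_j` to vanish on the hyperplane `λ_k = 0`. The
forms `λ_k` are pairwise coprime, so their product divides `p_j`, and each factor lowers the degree
by one.
-/

section Polynomial

open MvPolynomial

variable {σ : Type*}

theorem dvd_sub_bind₁_of_forall_dvd {R : Type*} [CommRing R] {L : MvPolynomial σ R}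
    {f : σ → MvPolynomial σ R} (hf : ∀ i, L ∣ X i - f i) (p : MvPolynomial σ R) :
    L ∣ p - bind₁ f p := by
  let π := Ideal.Quotient.mkₐ R (Ideal.span {L})
  have hπ_eq : ∀ {a b}, π a = π b ↔ L ∣ a - b := fun {a b} =>
    (Ideal.Quotient.mk_eq_mk_iff_sub_mem a b).trans Ideal.mem_span_singleton
  have hπ : π = π.comp (bind₁ f) := algHom_ext fun i => by
    simpa only [AlgHom.comp_apply, bind₁_X_right] using hπ_eq.mpr (hf i)
  exact hπ_eq.mp (DFunLike.congr_fun hπ p)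

theorem totalDegree_prod_of_ne_zero {R ι : Type*} [CommSemiring R] [NoZeroDivisors R] [Nontrivial R]
    (s : Finset ι) {f : ι → MvPolynomial σ R} (hf : ∀ i ∈ s, f i ≠ 0) :
    (∏ i ∈ s, f i).totalDegree = ∑ i ∈ s, (f i).totalDegree := by
  induction s using Finset.cons_induction with
  | empty => simp
  | cons i s hi ih =>
    rw [Finset.forall_mem_cons] at hf
    rw [Finset.prod_cons, Finset.sum_cons, totalDegree_mul_of_isDomain hf.1
      (Finset.prod_ne_zero_iff.mpr hf.2), ih hf.2]

theorem isRelPrime_of_eval_eq_zero_of_eval_ne_zero {R : Type*} [CommSemiring R]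
    {p q : MvPolynomial σ R} (hp : Irreducible p) {x : σ → R} (hpx : eval x p = 0)
    (hqx : eval x q ≠ 0) : IsRelPrime p q :=
  hp.isRelPrime_iff_not_dvd.mpr fun hpq =>
    hqx <| zero_dvd_iff.mp <| hpx ▸ map_dvd (eval x) hpq

variable {K : Type*} [Field K]

theorem irreducible_of_totalDegree_eq_one_of_field {p : MvPolynomial σ K}
    (hp : p.totalDegree = 1) : Irreducible p := by
  refine irreducible_of_totalDegree_eq_one hp fun x hx => isUnit_iff_ne_zero.mpr ?_
  rintro rfl
  have hp0 : p = 0 := MvPolynomial.ext _ _ fun m => by simpa using hx m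
  simp [hp0] at hp

variable [Fintype σ]

/-- The polynomial of the affine function `x ↦ c + a ⬝ᵥ x` on the coordinate space `σ → R`,
such as a barycentric coordinate with gradient `a`. -/
noncomputable def affineForm {R : Type*} [CommSemiring R] (c : R) (a : σ → R) : MvPolynomial σ R :=
  C c + ∑ i, C (a i) * X i

theorem eval_affineForm {R : Type*} [CommSemiring R] (c : R) (a x : σ → R) :
    eval x (affineForm c a) = c + a ⬝ᵥ x := by
  simp [affineForm, dotProduct]

theorem totalDegree_affineForm {R : Type*} [CommSemiring R] (c : R) {a : σ → R} (ha : a ≠ 0) :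
    (affineForm c a).totalDegree = 1 := by
  classical
  obtain ⟨i, hi⟩ := Function.ne_iff.mp ha
  have : Nontrivial R := nontrivial_of_ne _ _ hi
  apply le_antisymm
  · refine (totalDegree_add _ _).trans (max_le (by simp) (totalDegree_finsetSum_le fun j _ => ?_))
    exact (totalDegree_mul _ _).trans (by simp)
  · have hcoeff : coeff (Finsupp.single i 1) (affineForm c a) = a i := by
      simp [affineForm, coeff_sum, coeff_C_mul, coeff_X, Finsupp.single_left_inj,
        eq_comm (a := (0 : σ →₀ ℕ))]
    simpa using le_totalDegree (mem_support_iff.mpr (hcoeff.trans_ne hi))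

variable [Infinite K]

theorem affineForm_dvd_iff (c : K) {a : σ → K} (ha : a ≠ 0) {p : MvPolynomial σ K} :
    affineForm c a ∣ p ↔ ∀ x, c + a ⬝ᵥ x = 0 → eval x p = 0 := by
  classical
  refine ⟨fun ⟨q, hq⟩ x hx => by rw [hq, map_mul, eval_affineForm, hx, zero_mul], fun hp => ?_⟩
  obtain ⟨i, hi⟩ := Function.ne_iff.mp ha
  let e : σ → K := Pi.single i (a i)⁻¹
  have hae : a ⬝ᵥ e = 1 := by simpa [e] using mul_inv_cancel₀ hi
  let proj : σ → MvPolynomial σ K := fun j => X j - C (e j) * affineForm c a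
  have hproj : bind₁ proj p = 0 := MvPolynomial.funext fun x => by
    have heval : eval x (bind₁ proj p) = eval (x - (c + a ⬝ᵥ x) • e) p := by
      rw [← coe_aeval_eq_eval, RingHom.coe_coe, aeval_bind₁, aeval_eq_eval]
      congr! with j
      simp [proj, eval_affineForm, mul_comm]
    rw [heval, map_zero]
    apply hp
    rw [dotProduct_sub, dotProduct_smul, hae, smul_eq_mul]
    ring
  simpa [hproj] using dvd_sub_bind₁_of_forall_dvd
    (L := affineForm c a) (f := proj) (fun j => by simp [proj]) p

/-- The subtraction of degrees is truncated only for `p = 0`. -/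
theorem exists_eq_prod_affineForm_mul {ι : Type*} (s : Finset ι) {c : ι → K} {a : ι → σ → K}
    (ha : ∀ i ∈ s, a i ≠ 0)
    (hdistinct : (s : Set ι).Pairwise fun i j => ∃ x, c i + a i ⬝ᵥ x = 0 ∧ c j + a j ⬝ᵥ x ≠ 0)
    {p : MvPolynomial σ K} (hp : ∀ i ∈ s, ∀ x, c i + a i ⬝ᵥ x = 0 → eval x p = 0) :
    ∃ q : MvPolynomial σ K, q.totalDegree = p.totalDegree - s.card ∧
      p = (∏ i ∈ s, affineForm (c i) (a i)) * q := by
  have hdeg : ∀ i ∈ s, (affineForm (c i) (a i)).totalDegree = 1 := fun i hi =>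
    totalDegree_affineForm _ (ha i hi)
  have hirr : ∀ i ∈ s, Irreducible (affineForm (c i) (a i)) := fun i hi =>
    irreducible_of_totalDegree_eq_one_of_field (hdeg i hi)
  have hcoprime : (s : Set ι).Pairwise
      (Function.onFun IsRelPrime fun i => affineForm (c i) (a i)) := fun i hi j hj hij => by
    obtain ⟨x, hix, hjx⟩ := hdistinct hi hj hij
    rw [← eval_affineForm] at hix hjx
    exact isRelPrime_of_eval_eq_zero_of_eval_ne_zero (hirr i hi) hix hjx
  obtain ⟨q, hq⟩ := Finset.prod_dvd_of_isRelPrime hcoprime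
    fun i hi => (affineForm_dvd_iff _ (ha i hi)).mpr (hp i hi)
  refine ⟨q, ?_, hq⟩
  rcases eq_or_ne q 0 with rfl | hq0
  · simp [hq]
  have hne : ∀ i ∈ s, affineForm (c i) (a i) ≠ 0 := fun i hi => (hirr i hi).ne_zero
  rw [hq, totalDegree_mul_of_isDomain (Finset.prod_ne_zero_iff.mpr hne) hq0,
    totalDegree_prod_of_ne_zero s hne, Finset.sum_congr rfl hdeg, Finset.sum_const, smul_eq_mul,
    mul_one, Nat.add_sub_cancel_left]

end Polynomial

theorem mem_affineSpan_image_ne_of_apply_eq_zero {k V P ι : Type*} [Ring k] [NoZeroDivisors k]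
    [AddCommGroup V] [Module k V] [AddTorsor V P] {v : ι → P}
    (hv : affineSpan k (Set.range v) = ⊤) (f : P →ᵃ[k] k) {i : ι} (hi : f (v i) ≠ 0)
    (hne : ∀ j, j ≠ i → f (v j) = 0) {x : P} (hx : f x = 0) :
    x ∈ affineSpan k (v '' {j | j ≠ i}) := by
  have : Nontrivial k := nontrivial_of_ne _ _ hi
  obtain ⟨s, w, hw, rfl⟩ := eq_affineCombination_of_mem_affineSpan
    (hv ▸ AffineSubspace.mem_top k V x)
  refine affineCombination_mem_affineSpan_image hw (fun j hj hji => ?_) v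
  obtain rfl : j = i := by simpa using hji
  have hfw : f (s.affineCombination k v w) = w j * f (v j) := by
    rw [s.map_affineCombination v w hw, s.affineCombination_eq_linear_combination _ w hw]
    exact Finset.sum_eq_single_of_mem j hj fun l _ hl => by simp [hne l hl]
  exact (mul_eq_zero.mp (hfw ▸ hx)).resolve_right hi

section Barycentric

variable {E : Type*} [NormedAddCommGroup E] [InnerProductSpace ℝ E]

theorem mem_affineSpan_face_of_add_inner_eq_zero {ι : Type*} [DecidableEq ι] {v : ι → E}
    (hv : affineSpan ℝ (Set.range v) = ⊤) {c : ℝ} {g : E} {i : ι}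
    (hdual : ∀ j, c + ⟪g, v j⟫ = if i = j then 1 else 0) {x : E} (hx : c + ⟪g, x⟫ = 0) :
    x ∈ affineSpan ℝ (v '' {j | j ≠ i}) :=
  mem_affineSpan_image_ne_of_apply_eq_zero hv
    (AffineMap.const ℝ E c + (innerₗ E g).toAffineMap)
    (by simp [hdual]) (fun j hj => by simp [hdual, hj.symm]) (by simpa using hx)

variable {n : ℕ} {v g : Fin (n + 1) → E} {c : Fin (n + 1) → ℝ}

theorem inner_gradient_edge (hdual : ∀ i j, c i + ⟪g i, v j⟫ = if i = j then 1 else 0)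
    (l j : Fin n) : ⟪g l.succ, v j.succ - v 0⟫ = if l = j then 1 else 0 := by
  have hj := hdual l.succ j.succ
  have h0 := hdual l.succ 0
  simp only [Fin.succ_inj, Fin.succ_ne_zero, if_false] at hj h0
  rw [inner_sub_right]
  linarith

theorem edge_mem_direction_face (v : Fin (n + 1) → E) {j k : Fin n} (hjk : j ≠ k) :
    v j.succ - v 0 ∈ (affineSpan ℝ (v '' {i | i ≠ k.succ})).direction :=
  AffineSubspace.vsub_mem_direction
    (mem_affineSpan ℝ (Set.mem_image_of_mem v (Fin.succ_injective n |>.ne hjk)))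
    (mem_affineSpan ℝ (Set.mem_image_of_mem v (Fin.succ_ne_zero k).symm))

theorem coeff_eq_zero_of_trace_eq_zero
    (hdual : ∀ i j, c i + ⟪g i, v j⟫ = if i = j then 1 else 0) {j k : Fin n} (hjk : j ≠ k)
    (a : Fin n → ℝ)
    (htrace : ∀ w ∈ (affineSpan ℝ (v '' {i | i ≠ k.succ})).direction,
      ⟪∑ l, a l • g l.succ, w⟫ = 0) : a j = 0 :=
  calc a j = ⟪∑ l, a l • g l.succ, v j.succ - v 0⟫ := by
        simp [sum_inner, real_inner_smul_left, inner_gradient_edge hdual]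
    _ = 0 := htrace _ (edge_mem_direction_face v hjk)

end Barycentric

theorem inner_eq_ofLp_dotProduct_ofLp {σ : Type*} [Fintype σ] (x y : EuclideanSpace ℝ σ) :
    ⟪x, y⟫ = x.ofLp ⬝ᵥ y.ofLp := by
  simp [PiLp.inner_apply, dotProduct, mul_comm]

theorem bubble_representation_general {n : ℕ} {v : Fin (n + 1) → EuclideanSpace ℝ (Fin n)}
    (hv : AffineIndependent ℝ v) {lam : Fin (n + 1) → EuclideanSpace ℝ (Fin n) → ℝ}
    {g : Fin (n + 1) → EuclideanSpace ℝ (Fin n)} {c : Fin (n + 1) → ℝ}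
    (hlam : ∀ i x, lam i x = c i + ⟪g i, x⟫)
    (hdelta : ∀ i j, lam i (v j) = if i = j then 1 else 0)
    (p : Fin n → MvPolynomial (Fin n) ℝ)
    {ω : EuclideanSpace ℝ (Fin n) → ℝ} (hω : ∀ x, ω x ≠ 0)
    {u : EuclideanSpace ℝ (Fin n) → EuclideanSpace ℝ (Fin n)}
    (hu : ∀ x, u x = ω x • ∑ j : Fin n, (MvPolynomial.eval (fun i => x i) (p j)) • g j.succ)
    (htrace : ∀ i : Fin n, ∀ x ∈ affineSpan ℝ (v '' {k | k ≠ i.succ}),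
      ∀ w ∈ (affineSpan ℝ (v '' {k | k ≠ i.succ})).direction, ⟪u x, w⟫ = 0) (j : Fin n) :
    ∃ Q : MvPolynomial (Fin n) ℝ, Q.totalDegree = (p j).totalDegree - (n - 1) ∧
      ∀ x : EuclideanSpace ℝ (Fin n),
        MvPolynomial.eval (fun i => x i) (p j)
          = (∏ k ∈ Finset.univ.erase j, lam k.succ x) *
              MvPolynomial.eval (fun i => x i) Q := by
  have hspan : affineSpan ℝ (Set.range v) = ⊤ :=
    hv.affineSpan_eq_top_iff_card_eq_finrank_add_one.mpr (by simp)
  have hdual : ∀ i j, c i + ⟪g i, v j⟫ = if i = j then 1 else 0 := fun i j =>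
    hlam i (v j) ▸ hdelta i j
  have hgrad : ∀ k : Fin n, (g k.succ).ofLp ≠ 0 := fun k hk => by
    simpa [inner_eq_ofLp_dotProduct_ofLp, hk] using inner_gradient_edge hdual k k
  have hdistinct : Pairwise fun k l : Fin n => ∃ x,
      c k.succ + g k.succ ⬝ᵥ x = 0 ∧ c l.succ + g l.succ ⬝ᵥ x ≠ 0 := fun k l hkl =>
    ⟨v l.succ, by simp [← inner_eq_ofLp_dotProduct_ofLp, hdual, hkl]⟩
  have hvanish : ∀ k ∈ Finset.univ.erase j, ∀ x, c k.succ + g k.succ ⬝ᵥ x = 0 →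
      MvPolynomial.eval x (p j) = 0 := fun k hk x hx => by
    rw [← WithLp.ofLp_toLp 2 x, ← inner_eq_ofLp_dotProduct_ofLp] at hx
    refine coeff_eq_zero_of_trace_eq_zero hdual (Finset.ne_of_mem_erase hk).symm
      (fun l => MvPolynomial.eval x (p l)) fun w hw => ?_
    have hxw := htrace k _ (mem_affineSpan_face_of_add_inner_eq_zero hspan (hdual _) hx) w hw
    rw [hu, real_inner_smul_left] at hxw
    exact (mul_eq_zero.mp hxw).resolve_left (hω _)
  obtain ⟨Q, hdeg, hQ⟩ :=
    exists_eq_prod_affineForm_mul _ (fun k _ => hgrad k) (hdistinct.set_pairwise _) hvanish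
  refine ⟨Q, by simpa using hdeg, fun x => ?_⟩
  simp [hQ, map_prod, eval_affineForm, hlam, inner_eq_ofLp_dotProduct_ofLp]

/-- Bubble-function representation lemma for the quasi-polynomial space
`(e^{-q·x} P_{r-1})^n`: if the vector field
`u(x) = e^{-q·x} Σ_{j=1}^n p_j(x) ∇λ_j` (with `p_j` polynomials of degree ≤ `r - 1`)
has vanishing trace (tangential projection) on every face `F_i = {λ_i = 0}`,
`i = 1, …, n`, of the simplex `[v₀, …, v_n]`, then each coefficient factors as
`p_j = (∏_{k ≠ j} λ_k) q_j` with `q_j` a polynomial of degree ≤ `r - n`. -/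
theorem bubble_representation (n r : ℕ) (hn : 1 ≤ n) (hr : n ≤ r)
    (q : EuclideanSpace ℝ (Fin n))
    (v : Fin (n + 1) → EuclideanSpace ℝ (Fin n)) (hv : AffineIndependent ℝ v)
    (lam : Fin (n + 1) → EuclideanSpace ℝ (Fin n) → ℝ)
    (g : Fin (n + 1) → EuclideanSpace ℝ (Fin n)) (c : Fin (n + 1) → ℝ)
    (hlam : ∀ i x, lam i x = c i + ⟪g i, x⟫)
    (hdelta : ∀ i j, lam i (v j) = if i = j then 1 else 0)
    (hsum : ∀ x, (∑ i, lam i x) = 1)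
    (p : Fin n → MvPolynomial (Fin n) ℝ)
    (hp : ∀ j, (p j).totalDegree ≤ r - 1)
    (u : EuclideanSpace ℝ (Fin n) → EuclideanSpace ℝ (Fin n))
    (hu : ∀ x, u x = Real.exp (-⟪q, x⟫) •
      ∑ j : Fin n, (MvPolynomial.eval (fun i => x i) (p j)) • g j.succ)
    (htrace : ∀ i : Fin n, ∀ x ∈ affineSpan ℝ (v '' {k | k ≠ i.succ}),
      ∀ w ∈ (affineSpan ℝ (v '' {k | k ≠ i.succ})).direction, ⟪u x, w⟫ = 0) :
    ∀ j : Fin n, ∃ Q : MvPolynomial (Fin n) ℝ, Q.totalDegree ≤ r - n ∧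
      ∀ x : EuclideanSpace ℝ (Fin n),
        MvPolynomial.eval (fun i => x i) (p j)
          = (∏ k ∈ Finset.univ.erase j, lam k.succ x) *
              MvPolynomial.eval (fun i => x i) Q := by
  intro j
  obtain ⟨Q, hdeg, hQ⟩ := bubble_representation_general hv hlam hdelta p
    (fun x => Real.exp_ne_zero (-⟪q, x⟫)) hu htrace j
  exact ⟨Q, by have := hp j; omega, hQ⟩
end

section
/- Let n ≥ 1, let y₁, …, y_{n+1} be affinely independent points in ℝ^n with barycentric coordinates λ₁, …, λ_{n+1}, let D be an invertible real n×n matrix, and let J ∈ ℝ^n be a constant vector. Then for every index j ∈ {1,…,n+1}: J · ∇λ_j = Σ_{i ≠ j} (D⁻¹J · (y_i − y_j)) (D∇λ_i · ∇λ_j). -/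
open RealInnerProductSpace

/-- The action of an `n × n` matrix on vectors of `ℝ^n` (as a linear map). -/
noncomputable def matVec {n : ℕ} (D : Matrix (Fin n) (Fin n) ℝ)
    (v : EuclideanSpace ℝ (Fin n)) : EuclideanSpace ℝ (Fin n) :=
  (WithLp.equiv 2 (Fin n → ℝ)).symm (D.mulVec (WithLp.equiv 2 (Fin n → ℝ) v))

/-!
Since `p - q = ∑ᵢ λᵢ(p) (yᵢ - q)` for all points `p` and `q`, differentiating in `p` gives
`v = ∑ᵢ (∇λᵢ · v) (yᵢ - q)` for every vector `v`. Pairing with `u` gives the dual expansion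
`u = ∑ᵢ (u · (yᵢ - q)) ∇λᵢ`. Apply `D` to it with `u = D⁻¹J` and test against `∇λⱼ`; for `q = yⱼ`
the term `i = j` vanishes and only edges at `yⱼ` remain.
-/

section BarycentricCoordinates

variable {ι k V P : Type*} [Fintype ι] [Ring k] [AddCommGroup V] [Module k V] [AddTorsor V P]

theorem sum_coord_smul_vsub (b : AffineBasis ι k P) (p q : P) :
    ∑ i, b.coord i p • (b i -ᵥ q) = p -ᵥ q := by
  rw [eq_comm, ← eq_vadd_iff_vsub_eq, ← Finset.weightedVSubOfPoint_apply,
    ← Finset.affineCombination_eq_weightedVSubOfPoint_vadd_of_sum_eq_one _ _ _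
      (b.sum_coord_apply_eq_one p),
    b.affineCombination_coord_eq_self]

theorem sum_coord_linear_smul_vsub (b : AffineBasis ι k P) (q : P) (v : V) :
    ∑ i, (b.coord i).linear v • (b i -ᵥ q) = v := by
  have hcoord (i : ι) : (b.coord i).linear v = b.coord i (v +ᵥ q) - b.coord i q := by
    rw [AffineMap.map_vadd, vadd_eq_add, add_sub_cancel_right]
  simp only [hcoord, sub_smul, Finset.sum_sub_distrib, sum_coord_smul_vsub, vadd_vsub, vsub_self,
    sub_zero]

end BarycentricCoordinates

section BarycentricGradients

variable {ι 𝕜 V P : Type*} [RCLike 𝕜] [NormedAddCommGroup V] [InnerProductSpace 𝕜 V]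
  [AddTorsor V P] {b : AffineBasis ι 𝕜 P}

theorem inner_eq_coord_linear_of_sub_eq_inner_vsub [DecidableEq ι] {f : P → 𝕜} {g : V} {i : ι}
    (hf : ∀ p q, f p - f q = inner 𝕜 g (p -ᵥ q))
    (hfb : ∀ j, f (b j) = if i = j then 1 else 0) (v : V) :
    inner 𝕜 g v = (b.coord i).linear v := by
  have hlinear : innerₛₗ 𝕜 g = (b.coord i).linear := (b.basisOf i).ext fun j => by
    rw [b.basisOf_apply, innerₛₗ_apply_apply, ← hf, hfb, hfb, AffineMap.linearMap_vsub,
      b.coord_apply, b.coord_apply, vsub_eq_sub]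
  exact LinearMap.congr_fun hlinear v

variable [Fintype ι] {g : ι → V}

theorem sum_inner_vsub_smul_gradient (hg : ∀ i v, inner 𝕜 (g i) v = (b.coord i).linear v)
    (q : P) (u : V) : ∑ i, inner 𝕜 (b i -ᵥ q) u • g i = u := by
  refine ext_inner_right 𝕜 fun v => ?_
  calc inner 𝕜 (∑ i, inner 𝕜 (b i -ᵥ q) u • g i) v
      = ∑ i, (b.coord i).linear v * inner 𝕜 u (b i -ᵥ q) := by
        simp only [sum_inner, inner_smul_left, inner_conj_symm, hg, mul_comm]
    _ = inner 𝕜 u (∑ i, (b.coord i).linear v • (b i -ᵥ q)) := by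
        simp only [inner_sum, inner_smul_right]
    _ = inner 𝕜 u v := by rw [sum_coord_linear_smul_vsub]

theorem constant_flux_edge_expansion_general [DecidableEq ι] {W : Type*} [NormedAddCommGroup W]
    [InnerProductSpace 𝕜 W] (hg : ∀ i v, inner 𝕜 (g i) v = (b.coord i).linear v)
    (D : V →ₗ[𝕜] W) (u : V) (w : W) (j : ι) :
    inner 𝕜 (D u) w =
      ∑ i ∈ Finset.univ.erase j, inner 𝕜 u (b i -ᵥ b j) * inner 𝕜 (D (g i)) w := by
  rw [Finset.sum_erase _ (by rw [vsub_self, inner_zero_right, zero_mul])]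
  conv_lhs => rw [← sum_inner_vsub_smul_gradient hg (b j) u]
  simp only [map_sum, map_smul, sum_inner, inner_smul_left, inner_conj_symm]

end BarycentricGradients

theorem matVec_matVec_inv {n : ℕ} {D : Matrix (Fin n) (Fin n) ℝ} (hD : IsUnit D)
    (v : EuclideanSpace ℝ (Fin n)) : matVec D (matVec D⁻¹ v) = v := by
  simp [matVec, D.mul_nonsing_inv (D.isUnit_iff_isUnit_det.mp hD)]

/-- A constant flux `J` tested against a barycentric gradient expands in terms of its edge
tangential components `D⁻¹J · (y_i - y_j)` weighted by the stiffness entries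
`D∇λ_i · ∇λ_j`:  `J · ∇λ_j = Σ_{i ≠ j} (D⁻¹J · (y_i - y_j)) (D∇λ_i · ∇λ_j)`. -/
theorem constant_flux_edge_expansion (n : ℕ) (hn : 1 ≤ n)
    (y : Fin (n + 1) → EuclideanSpace ℝ (Fin n)) (hy : AffineIndependent ℝ y)
    (lam : Fin (n + 1) → EuclideanSpace ℝ (Fin n) → ℝ)
    (g : Fin (n + 1) → EuclideanSpace ℝ (Fin n)) (c : Fin (n + 1) → ℝ)
    (hlam : ∀ i z, lam i z = c i + ⟪g i, z⟫)
    (hdelta : ∀ i j, lam i (y j) = if i = j then 1 else 0)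
    (hsum : ∀ z, (∑ i, lam i z) = 1)
    (D : Matrix (Fin n) (Fin n) ℝ) (hD : IsUnit D)
    (J : EuclideanSpace ℝ (Fin n)) :
    ∀ j : Fin (n + 1), ⟪J, g j⟫
      = ∑ i ∈ Finset.univ.erase j,
          ⟪matVec D⁻¹ J, y i - y j⟫ * ⟪matVec D (g i), g j⟫ := by
  intro j
  let b : AffineBasis (Fin (n + 1)) ℝ (EuclideanSpace ℝ (Fin n)) :=
    ⟨y, hy, hy.affineSpan_eq_top_iff_card_eq_finrank_add_one.mpr (by simp)⟩
  have hgrad (i : Fin (n + 1)) (p q : EuclideanSpace ℝ (Fin n)) :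
      lam i p - lam i q = ⟪g i, p -ᵥ q⟫ := by
    rw [hlam, hlam, vsub_eq_sub, inner_sub_right, add_sub_add_left_eq_sub]
  have hg (i : Fin (n + 1)) (v : EuclideanSpace ℝ (Fin n)) : ⟪g i, v⟫ = (b.coord i).linear v :=
    inner_eq_coord_linear_of_sub_eq_inner_vsub (hgrad i) (hdelta i) v
  conv_lhs => rw [← matVec_matVec_inv hD J]
  exact constant_flux_edge_expansion_general hg D.toEuclideanLin (matVec D⁻¹ J) (g j) j
end
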